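/- arXiv:math/0703066 — 2 statements merged into one kernel-verified Lean document; each statement's English description precedes it below -/
import Mathlib

section
/- The dihedral group D₈ of order 16 is not (1 | 2)-generated; that is, there do not exist elements h₁, h₂ generating D₈ such that the commutator h₁h₂h₁⁻¹h₂⁻¹ has order 2. -/
/-!
If `x` and `y` generate a dihedral group, then `⁅x, y⁆` is a rotation, and every subgroup generated
by a rotation is normal. Modulo `zpowers ⁅x, y⁆` the generators commute, so this subgroup is the
whole commutator subgroup. Hence the order of `⁅x, y⁆` does not depend on the generating pair; the
standard pair shows that it is the order of `r 2`, which equals `2` exactly when `n = 4`.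
-/

open Subgroup DihedralGroup

open scoped commutatorElement

section GeneratingSets

variable {G : Type*} [Group G]

theorem commutator_le_of_closure_eq_top {s : Set G} {N : Subgroup G} [N.Normal]
    (hs : Subgroup.closure s = ⊤) (hN : ∀ a ∈ s, ∀ b ∈ s, ⁅a, b⁆ ∈ N) : commutator G ≤ N := by
  rw [← Normal.quotient_commutative_iff_commutator_le]
  have closure_image : Subgroup.closure (QuotientGroup.mk' N '' s) = ⊤ := by
    rw [← MonoidHom.map_closure, hs, map_top_of_surjective _ (QuotientGroup.mk'_surjective N)]
  have image_comm : IsMulCommutative (Subgroup.closure (QuotientGroup.mk' N '' s)) := by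
    refine isMulCommutative_closure ?_
    rintro _ ⟨a, ha, rfl⟩ _ ⟨b, hb, rfl⟩
    rw [← commutatorElement_eq_one_iff_mul_comm, ← map_commutatorElement]
    exact (QuotientGroup.eq_one_iff _).mpr (hN a ha b hb)
  rw [closure_image] at image_comm
  exact ⟨⟨fun a b ↦ setLike_mul_comm (mem_top a) (mem_top b)⟩⟩

theorem commutator_eq_zpowers_of_closure_pair_eq_top {x y : G} [(zpowers ⁅x, y⁆).Normal]
    (h : Subgroup.closure {x, y} = ⊤) : commutator G = zpowers ⁅x, y⁆ := by
  refine le_antisymm (commutator_le_of_closure_eq_top h ?_) ?_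
  · have mem_swap : ⁅y, x⁆ ∈ zpowers ⁅x, y⁆ :=
      commutatorElement_inv x y ▸ inv_mem (mem_zpowers ⁅x, y⁆)
    rintro a (rfl | rfl) b (rfl | rfl) <;> simp [mem_swap]
  · exact zpowers_le.mpr (commutator_mem_commutator (mem_top x) (mem_top y))

end GeneratingSets

section Dihedral

variable {n : ℕ}

theorem exists_commutatorElement_eq_r (x y : DihedralGroup n) : ∃ i, ⁅x, y⁆ = r i := by
  cases x <;> cases y <;> simp [commutatorElement_def, -r_zero]

theorem normal_zpowers_r (i : ZMod n) : (zpowers (r i)).Normal := by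
  refine ⟨?_⟩
  rintro _ ⟨k, rfl⟩ (j | j)
  · exact ⟨k, by simp⟩
  · exact ⟨-k, by simp⟩

theorem closure_r_one_sr_zero :
    Subgroup.closure {r 1, sr 0} = (⊤ : Subgroup (DihedralGroup n)) := by
  rw [eq_top_iff']
  have r_mem (i : ZMod n) : r i ∈ Subgroup.closure {r 1, sr 0} := by
    obtain ⟨k, rfl⟩ := ZMod.intCast_surjective i
    rw [← r_one_zpow]
    exact zpow_mem (subset_closure (by simp)) k
  rintro (i | i)
  · exact r_mem i
  · have sr_eq : sr i = sr 0 * r i := by simp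
    rw [sr_eq]
    exact mul_mem (subset_closure (by simp)) (r_mem i)

theorem commutator_dihedralGroup_eq_zpowers {x y : DihedralGroup n}
    (h : Subgroup.closure {x, y} = ⊤) : commutator (DihedralGroup n) = zpowers ⁅x, y⁆ := by
  obtain ⟨i, hi⟩ := exists_commutatorElement_eq_r x y
  have : (zpowers ⁅x, y⁆).Normal := hi ▸ normal_zpowers_r i
  exact commutator_eq_zpowers_of_closure_pair_eq_top h

theorem orderOf_commutatorElement_of_closure_eq_top {x y : DihedralGroup n}
    (h : Subgroup.closure {x, y} = ⊤) : orderOf ⁅x, y⁆ = orderOf (r 2 : DihedralGroup n) := by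
  have standard_pair : ⁅r (1 : ZMod n), sr (0 : ZMod n)⁆ = r 2 := by
    simp [commutatorElement_def, one_add_one_eq_two]
  have zpowers_eq : zpowers ⁅x, y⁆ = zpowers (r 2) := by
    rw [← commutator_dihedralGroup_eq_zpowers h,
      commutator_dihedralGroup_eq_zpowers closure_r_one_sr_zero, standard_pair]
  rw [← Nat.card_zpowers, zpowers_eq, Nat.card_zpowers]

theorem orderOf_r_two_eq_two_iff : orderOf (r 2 : DihedralGroup n) = 2 ↔ n = 4 := by
  have r_two : (r 2 : DihedralGroup n) = r 1 ^ 2 := by simp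
  rw [r_two, orderOf_pow' _ two_ne_zero, orderOf_r_one]
  rcases Nat.even_or_odd n with heven | hodd
  · rw [Nat.gcd_eq_right heven.two_dvd]
    grind
  · rw [hodd.coprime_two_right.gcd_eq_one]
    grind

theorem dihedral8_not_one_two_generated_general :
    (∃ h₁ h₂ : DihedralGroup n,
        Subgroup.closure {h₁, h₂} = ⊤ ∧ orderOf (h₁ * h₂ * h₁⁻¹ * h₂⁻¹) = 2) ↔ n = 4 := by
  simp only [← commutatorElement_def]
  constructor
  · rintro ⟨h₁, h₂, hgen, hord⟩
    rwa [orderOf_commutatorElement_of_closure_eq_top hgen, orderOf_r_two_eq_two_iff] at hord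
  · intro hn
    refine ⟨r 1, sr 0, closure_r_one_sr_zero, ?_⟩
    rwa [orderOf_commutatorElement_of_closure_eq_top closure_r_one_sr_zero,
      orderOf_r_two_eq_two_iff]

end Dihedral

/-- The dihedral group `D₈` of order 16 is not `(1 | 2)`-generated. -/
theorem dihedral8_not_one_two_generated :
    ¬ ∃ h₁ h₂ : DihedralGroup 8,
        Subgroup.closure ({h₁, h₂} : Set (DihedralGroup 8)) = ⊤ ∧
        orderOf (h₁ * h₂ * h₁⁻¹ * h₂⁻¹) = 2 := by
  rw [dihedral8_not_one_two_generated_general]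
  decide
end

section
/- The group ℤ₃ × S₄, the direct product of the cyclic group of order 3 with the symmetric group on 4 letters, is not (1 | 2)-generated; that is, there do not exist elements h₁, h₂ generating ℤ₃ × S₄ such that the commutator h₁h₂h₁⁻¹h₂⁻¹ has order 2. -/
/-!
The image in `S₄` of a generating pair of `ℤ₃ × S₄` generates `S₄`. If the commutator of the pair
has `2`-power order, then so has its image, which is even and hence lies in the Klein four-group
`V`. As `V` is normal in `S₄`, the generators commute modulo `V`, so `S₄ / V` is abelian and `V`
contains the commutator subgroup of `S₄`. But that is `A₄`, which is larger than `V`.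
-/

open Equiv Equiv.Perm
open scoped commutatorElement

section Commutator

variable {G : Type*} [Group G] {N : Subgroup G} [N.Normal]

theorem commutator_le_of_closure_eq_top_s18 {S : Set G} (hS : Subgroup.closure S = ⊤)
    (h : ∀ x ∈ S, ∀ y ∈ S, ⁅x, y⁆ ∈ N) : commutator G ≤ N := by
  let π := QuotientGroup.mk' N
  have commute : ∀ x ∈ S, ∀ y ∈ S, π x * π y = π y * π x := fun x hx y hy => by
    rw [← commutatorElement_eq_one_iff_mul_comm, ← map_commutatorElement]
    exact (QuotientGroup.eq_one_iff _).2 (h x hx y hy)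
  have closure_image : Subgroup.closure (π '' S) = ⊤ := by
    rw [← MonoidHom.map_closure, hS,
      Subgroup.map_top_of_surjective π (QuotientGroup.mk'_surjective N)]
  have quotient_comm := Subgroup.isMulCommutative_closure
    (Set.forall_mem_image.2 fun x hx => Set.forall_mem_image.2 (commute x hx))
  rw [closure_image, ← Subgroup.commutator_self_eq_bot_iff, ← commutator_def,
    commutator_eq_bot_iff] at quotient_comm
  exact Subgroup.Normal.quotient_commutative_iff_commutator_le.1 quotient_comm

theorem commutator_le_of_closure_pair_eq_top {a b : G} (hgen : Subgroup.closure {a, b} = ⊤)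
    (hab : ⁅a, b⁆ ∈ N) : commutator G ≤ N := by
  have hba : ⁅b, a⁆ ∈ N := commutatorElement_inv a b ▸ N.inv_mem hab
  refine commutator_le_of_closure_eq_top_s18 hgen ?_
  rintro _ (rfl | rfl) _ (rfl | rfl) <;> simp [hab, hba]

end Commutator

section Perm

variable {α : Type*} [DecidableEq α] [Fintype α]

theorem mem_commutatorSet_of_isThreeCycle {σ : Perm α} (hσ : σ.IsThreeCycle) :
    σ ∈ commutatorSet (Perm α) := by
  refine mem_commutatorSet_of_isConj_sq _ (isConj_of_cycleType_eq ?_)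
  rw [pow_two, hσ.isThreeCycle_sq.cycleType, hσ.cycleType]

theorem commutator_perm_eq_alternatingGroup : commutator (Perm α) = alternatingGroup α := by
  refine le_antisymm alternatingGroup.commutator_perm_le ?_
  rw [← closure_three_cycles_eq_alternating, commutator_eq_closure]
  exact Subgroup.closure_mono fun _ => mem_commutatorSet_of_isThreeCycle

theorem normal_map_subtype_kleinFour (hα : Nat.card α = 4) :
    ((alternatingGroup.kleinFour α).map (alternatingGroup α).subtype).Normal := by
  have := alternatingGroup.characteristic_kleinFour hα
  infer_instance

theorem mem_kleinFour_of_orderOf_dvd_two_pow (hα : Nat.card α = 4) {g : alternatingGroup α}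
    {n : ℕ} (hg : orderOf g ∣ 2 ^ n) : g ∈ alternatingGroup.kleinFour α := by
  rw [← SetLike.mem_coe, alternatingGroup.coe_kleinFour_of_card_eq_four hα]
  rw [← Subgroup.orderOf_coe] at hg
  exact (alternatingGroup.mem_kleinFour_of_order_two_pow hα g.2 hg).imp_left fun h =>
    Subtype.ext (cycleType_eq_zero.1 h)

theorem kleinFour_ne_top (hα : Nat.card α = 4) : alternatingGroup.kleinFour α ≠ ⊤ := by
  intro h
  have hcard := alternatingGroup.kleinFour_card_of_card_eq_four hα
  rw [h, Subgroup.card_top, alternatingGroup.card_of_card_eq_four hα] at hcard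
  omega

theorem not_alternatingGroup_le_map_subtype_kleinFour (hα : Nat.card α = 4) :
    ¬ alternatingGroup α ≤ (alternatingGroup.kleinFour α).map (alternatingGroup α).subtype := by
  intro h
  refine kleinFour_ne_top hα (eq_top_iff.2 ?_)
  rwa [← Subgroup.map_subtype_le_map_subtype, ← MonoidHom.range_eq_map, Subgroup.range_subtype]

end Perm

theorem not_orderOf_commutatorElement_perm_dvd_two_pow {α : Type*} (hα : Nat.card α = 4)
    {a b : Perm α} (hgen : Subgroup.closure {a, b} = ⊤) (n : ℕ) :
    ¬ orderOf ⁅a, b⁆ ∣ 2 ^ n := by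
  classical
  have : Finite α := Nat.finite_of_card_ne_zero (by simp [hα])
  have := Fintype.ofFinite α
  intro hord
  have even : ⁅a, b⁆ ∈ alternatingGroup α := alternatingGroup.commutator_perm_le
    (Subgroup.commutator_mem_commutator (Subgroup.mem_top a) (Subgroup.mem_top b))
  have mem_kleinFour : ⟨⁅a, b⁆, even⟩ ∈ alternatingGroup.kleinFour α :=
    mem_kleinFour_of_orderOf_dvd_two_pow hα (by rwa [Subgroup.orderOf_mk])
  have := normal_map_subtype_kleinFour hα
  have commutator_le := commutator_le_of_closure_pair_eq_top hgen
    (Subgroup.mem_map_of_mem (alternatingGroup α).subtype mem_kleinFour)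
  rw [commutator_perm_eq_alternatingGroup] at commutator_le
  exact not_alternatingGroup_le_map_subtype_kleinFour hα commutator_le

theorem Z3xS4_not_one_two_generated_general {G α : Type*} [Group G] (hα : Nat.card α = 4)
    {f : G →* Perm α} (hf : Function.Surjective f) {a b : G}
    (hgen : Subgroup.closure {a, b} = ⊤) (n : ℕ) : ¬ orderOf ⁅a, b⁆ ∣ 2 ^ n := by
  have closure_map : Subgroup.closure {f a, f b} = ⊤ := by
    rw [← Set.image_pair, ← MonoidHom.map_closure, hgen, Subgroup.map_top_of_surjective f hf]
  intro hord
  refine not_orderOf_commutatorElement_perm_dvd_two_pow hα closure_map n ?_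
  rw [← map_commutatorElement]
  exact (orderOf_map_dvd f _).trans hord

/-- `ℤ₃ × S₄` is not `(1 | 2)`-generated. -/
theorem Z3xS4_not_one_two_generated :
    ¬ ∃ h₁ h₂ : Multiplicative (ZMod 3) × Equiv.Perm (Fin 4),
        Subgroup.closure ({h₁, h₂} : Set (Multiplicative (ZMod 3) × Equiv.Perm (Fin 4))) = ⊤ ∧
        orderOf (h₁ * h₂ * h₁⁻¹ * h₂⁻¹) = 2 := by
  rintro ⟨h₁, h₂, hgen, hord⟩
  exact Z3xS4_not_one_two_generated_general (f := MonoidHom.snd _ _) (Nat.card_fin 4)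
    Prod.snd_surjective hgen 1 hord.dvd
end
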